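/- Network invertibility (Invertibility Theorem): let W_0, …, W_N be m×m real matrices and b_0, …, b_N ∈ ℝ^m, and let A be the unbiased Lorentzian Goldilocks activation A(t) = t + t/(π(1+t²)). The Goldilocks network map F = L_N ∘ ⋯ ∘ L_0 : ℝ^m → ℝ^m, where L_n(x)_i = A((W_n x + b_n)_i), is a bijection of ℝ^m if and only if every W_n is invertible (has full rank). -/

import Mathlib

open Real

/-- The unbiased Lorentzian Goldilocks activation. -/
noncomputable def goldilocksA : ℝ → ℝ := fun t => t + t / (π * (1 + t ^ 2))

/-- The Goldilocks layer map `L(x)ᵢ = A((Wx + b)ᵢ)`. -/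
noncomputable def goldilocksLayer {m : ℕ} (W : Matrix (Fin m) (Fin m) ℝ)
    (b : Fin m → ℝ) (x : Fin m → ℝ) : Fin m → ℝ :=
  fun i => goldilocksA ((W.mulVec x + b) i)

/-- The Goldilocks network map `L_N ∘ ⋯ ∘ L_0` obtained by composing the layers with
weights `W 0, …, W N` and biases `b 0, …, b N`. -/
noncomputable def goldilocksNet {m : ℕ} (W : ℕ → Matrix (Fin m) (Fin m) ℝ)
    (b : ℕ → Fin m → ℝ) : ℕ → (Fin m → ℝ) → (Fin m → ℝ)
  | 0 => goldilocksLayer (W 0) (b 0)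
  | n + 1 => goldilocksLayer (W (n + 1)) (b (n + 1)) ∘ goldilocksNet W b n

lemma goldA_inj : Function.Injective goldilocksA := by
  intro x y h
  unfold goldilocksA at h
  have hp := Real.pi_gt_three
  have hx : 0 < 1 + x ^ 2 := by positivity
  have hy : 0 < 1 + y ^ 2 := by positivity
  have hk : (x - y) * (π * ((1 + x ^ 2) * (1 + y ^ 2)) + (1 - x * y)) = 0 := by
    have hpi : π ≠ 0 := by positivity
    field_simp at h
    linear_combination h
  have h1 : 0 < (1 + x ^ 2) * (1 + y ^ 2) := by positivity
  have h2 : 3 * ((1 + x ^ 2) * (1 + y ^ 2)) ≤ π * ((1 + x ^ 2) * (1 + y ^ 2)) :=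
    mul_le_mul_of_nonneg_right hp.le h1.le
  have h3 : 0 < π * ((1 + x ^ 2) * (1 + y ^ 2)) + (1 - x * y) := by
    nlinarith [sq_nonneg (x - y), sq_nonneg (x * y), sq_nonneg x, sq_nonneg y]
  rcases mul_eq_zero.1 hk with h | h
  · linarith
  · linarith

lemma goldA_near (t : ℝ) : |t / (π * (1 + t ^ 2))| ≤ 1 := by
  have hp := Real.pi_gt_three
  have h1 : 0 < 1 + t ^ 2 := by positivity
  have h2 : 0 < π * (1 + t ^ 2) := by positivity
  rw [abs_div, abs_of_pos h2, div_le_one h2]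
  have : 3 * (1 + t ^ 2) ≤ π * (1 + t ^ 2) := mul_le_mul_of_nonneg_right hp.le h1.le
  rw [abs_le]
  constructor <;> nlinarith [sq_nonneg (t - 1), sq_nonneg (t + 1)]

lemma goldA_surj : Function.Surjective goldilocksA := by
  intro y
  have hc : Continuous goldilocksA := by
    unfold goldilocksA
    refine continuous_id.add (continuous_id.div (by fun_prop) ?_)
    intro t
    positivity
  have h1 := (abs_le.1 (goldA_near (y - 1))).2
  have h2 := (abs_le.1 (goldA_near (y + 1))).1
  refine mem_range_of_exists_le_of_exists_ge hc ⟨y - 1, ?_⟩ ⟨y + 1, ?_⟩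
  · simp only [goldilocksA]; linarith
  · simp only [goldilocksA]; linarith

lemma goldLayer_isUnit {m : ℕ} (W : Matrix (Fin m) (Fin m) ℝ) (b : Fin m → ℝ)
    (h : Function.Surjective (goldilocksLayer W b)) : IsUnit W := by
  rw [← Matrix.mulVec_surjective_iff_isUnit]
  intro y
  obtain ⟨z, hz⟩ := h (fun i => goldilocksA ((y + b) i))
  refine ⟨z, funext fun i => ?_⟩
  have := goldA_inj (congrFun hz i)
  simpa using this

lemma goldLayer_bij {m : ℕ} (W : Matrix (Fin m) (Fin m) ℝ) (b : Fin m → ℝ)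
    (h : IsUnit W) : Function.Bijective (goldilocksLayer W b) := by
  constructor
  · intro x y hxy
    apply Matrix.mulVec_injective_iff_isUnit.2 h
    funext i
    have := goldA_inj (congrFun hxy i)
    simpa using this
  · intro y
    choose g hg using goldA_surj
    obtain ⟨z, hz⟩ := Matrix.mulVec_surjective_iff_isUnit.2 h ((fun i => g (y i)) - b)
    refine ⟨z, funext fun i => ?_⟩
    simp only [goldilocksLayer]
    have hz' : W.mulVec z = (fun i => g (y i)) - b := hz
    rw [hz', sub_add_cancel, hg]



/-- Invertibility theorem: the Goldilocks network map `F = L_N ∘ ⋯ ∘ L_0` is a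
bijection of `ℝᵐ` if and only if every weight matrix `W n`, `n ≤ N`, is invertible. -/
theorem goldilocks_net_bijective_iff {m : ℕ} (N : ℕ)
    (W : ℕ → Matrix (Fin m) (Fin m) ℝ) (b : ℕ → Fin m → ℝ) :
    Function.Bijective (goldilocksNet W b N) ↔ ∀ n ≤ N, IsUnit (W n) := by

  induction N with
  | zero =>
    constructor
    · intro h n hn
      obtain rfl : n = 0 := by omega
      exact goldLayer_isUnit _ _ h.2
    · intro h
      exact goldLayer_bij _ _ (h 0 le_rfl)
  | succ k ih =>
    constructor
    · intro h
      have h' : Function.Bijective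
          (goldilocksLayer (W (k + 1)) (b (k + 1)) ∘ goldilocksNet W b k) := h
      have hu : IsUnit (W (k + 1)) := goldLayer_isUnit _ _ h'.2.of_comp
      have hb := goldLayer_bij _ (b (k + 1)) hu
      have hk := ih.1 ((Function.Bijective.of_comp_iff' hb _).1 h')
      intro n hn
      rcases Nat.lt_or_ge k n with h1 | h1
      · obtain rfl : n = k + 1 := by omega
        exact hu
      · exact hk n h1
    · intro h
      exact (goldLayer_bij _ _ (h (k + 1) le_rfl)).comp
        (ih.2 fun n hn => h n (by omega))
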